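/- Let M ≥ 0, let ℓ ≥ 1 be an integer, let α ∈ R, and let φ ∈ C^ℓ(ℝ^N) satisfy |∂^β φ(x)| ≤ (1 + ‖x‖)^{−𝐍−M} for all multi-indices β with |β| ≤ ℓ and all x ∈ ℝ^N. Define ψ(x) = (φ(x) − φ(σ_α(x))) / ⟨x,α⟩ on the open set {x : ⟨x,α⟩ ≠ 0}. Then there is a constant C > 0 such that for every multi-index β with |β| ≤ ℓ − 1 and every x with ⟨x,α⟩ ≠ 0, |∂^β ψ(x)| ≤ C (1 + ‖x‖)^{−𝐍−M}. -/

import Mathlib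

open MeasureTheory Metric
open scoped ENNReal RealInnerProductSpace BigOperators

noncomputable section

/-- The reflection `σ_α` in the hyperplane orthogonal to `α`. -/
def dunklReflect {N : ℕ} (α x : EuclideanSpace ℝ (Fin N)) : EuclideanSpace ℝ (Fin N) :=
  x - (2 * ⟪x, α⟫ / ‖α‖ ^ 2) • α

/-- The Dunkl weight measure `dw` with density `∏_{α ∈ R} |⟨x,α⟩|^{k α}`. -/
def dunklMeasure (N : ℕ) (R : Finset (EuclideanSpace ℝ (Fin N)))
    (k : EuclideanSpace ℝ (Fin N) → ℝ) : Measure (EuclideanSpace ℝ (Fin N)) :=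
  (volume : Measure (EuclideanSpace ℝ (Fin N))).withDensity fun x =>
    ENNReal.ofReal (∏ α ∈ R, |⟪x, α⟫| ^ (k α))

/-- The homogeneous dimension `𝐍 = N + Σ_{α ∈ R} k(α)`. -/
def homDim (N : ℕ) (R : Finset (EuclideanSpace ℝ (Fin N)))
    (k : EuclideanSpace ℝ (Fin N) → ℝ) : ℝ :=
  N + ∑ α ∈ R, k α

/-- The partial derivative in the `j`-th coordinate direction. -/
def pderivE {N : ℕ} (j : Fin N) (f : EuclideanSpace ℝ (Fin N) → ℂ) :
    EuclideanSpace ℝ (Fin N) → ℂ :=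
  fun x => fderiv ℝ f x (EuclideanSpace.single j 1)

/-- The iterated partial derivative `∂^β = ∂_1^{β 1} ∘ ⋯ ∘ ∂_N^{β N}`
for a multi-index `β`. -/
def mderivE {N : ℕ} (β : Fin N → ℕ) (f : EuclideanSpace ℝ (Fin N) → ℂ) :
    EuclideanSpace ℝ (Fin N) → ℂ :=
  (List.finRange N).foldr (fun j g => (pderivE j)^[β j] g) f

/-!
Where `|⟨x, α⟩| ≥ ‖α‖`, every derivative of `1 / ⟨x, α⟩` is bounded, and `σ_α` is an isometry that
preserves the weight `(1 + ‖x‖) ^ p`, so the Leibniz rule gives the estimate. Near the hyperplane,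
`ψ(x)` is the average over the segment `[x, σ_α x]` of the derivative of `φ` in the direction
`(2 / ‖α‖ ^ 2) α`, which involves no division. That segment has length at most `2`, so the weight
varies along it by a factor of at most `3 ^ |p|`. The loss of one derivative occurs only here.
-/

section ParametricIntegral

variable {E F : Type*} [NormedAddCommGroup E] [NormedSpace ℝ E]
  [NormedAddCommGroup F] [NormedSpace ℝ F]

theorem hasFDerivAt_intervalIntegral_of_contDiff {f : E → ℝ → F}
    (hf : ContDiff ℝ 1 (Function.uncurry f)) (a b : ℝ) (x : E) :
    HasFDerivAt (fun y => ∫ t in a..b, f y t) (∫ t in a..b, fderiv ℝ (fun y => f y t) x) x := by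
  have hf' : Continuous fun q : E × ℝ => fderiv ℝ (fun y => f y q.2) q.1 :=
    (ContDiff.fderiv (n := 0) (f := fun q : E × ℝ => fun y => f y q.2)
      (hf.comp (by fun_prop : ContDiff ℝ 1 fun r : (E × ℝ) × E => (r.2, r.1.2)))
      contDiff_fst (by simp)).continuous
  obtain ⟨C, hC⟩ :=
    (isCompact_uIcc (a := a) (b := b)).exists_bound_of_continuousOn
      (hf'.comp (.prodMk_right x)).continuousOn
  have hbound : ∀ᶠ y in nhds x, ∀ t ∈ Set.uIcc a b, ‖fderiv ℝ (fun y => f y t) y‖ ≤ C + 1 :=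
    isCompact_uIcc.eventually_forall_of_forall_eventually fun t ht =>
      (hf'.norm.tendsto (x, t)).eventually_le_const ((hC t ht).trans_lt (lt_add_one C))
  refine intervalIntegral.hasFDerivAt_integral_of_dominated_of_fderiv_le (bound := fun _ => C + 1)
    (F' := fun y t => fderiv ℝ (fun y => f y t) y) hbound
    (.of_forall fun y => (hf.continuous.uncurry_left y).aestronglyMeasurable)
    ((hf.continuous.uncurry_left x).intervalIntegrable _ _)
    (hf'.comp (.prodMk_right x)).aestronglyMeasurable
    (.of_forall fun t ht y hy => hy t (Set.uIoc_subset_uIcc ht)) intervalIntegrable_const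
    (.of_forall fun t _ y _ => ?_)
  exact ((hf.comp (contDiff_prodMk_left t)).differentiable one_ne_zero y).hasFDerivAt

theorem contDiff_iteratedFDeriv_uncurry {P : Type*} [NormedAddCommGroup P] [NormedSpace ℝ P]
    {f : E → P → F} {m : ℕ} (n : ℕ) (hf : ContDiff ℝ (m + n : ℕ) (Function.uncurry f)) :
    ContDiff ℝ m fun q : E × P => iteratedFDeriv ℝ n (fun y => f y q.2) q.1 := by
  induction n generalizing m with
  | zero =>
    exact (continuousMultilinearCurryFin0 ℝ E F).symm.contDiff.comp hf
  | succ n ih =>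
    have hn : ContDiff ℝ (m + 1 : ℕ) fun q : E × P => iteratedFDeriv ℝ n (fun y => f y q.2) q.1 :=
      ih (by rwa [add_right_comm])
    refine (continuousMultilinearCurryLeftEquiv ℝ (fun _ : Fin (n + 1) => E) F).symm.contDiff.comp
      (ContDiff.fderiv (n := m) (f := fun q : E × P => iteratedFDeriv ℝ n fun y => f y q.2)
        (hn.comp (?_ : ContDiff ℝ (m + 1 : ℕ) fun r : (E × P) × E => (r.2, r.1.2)))
        contDiff_fst (by norm_cast))
    fun_prop

theorem iteratedFDeriv_intervalIntegral [CompleteSpace F] {f : E → ℝ → F} (n : ℕ)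
    (hf : ContDiff ℝ n (Function.uncurry f)) (a b : ℝ) (x : E) :
    iteratedFDeriv ℝ n (fun y => ∫ t in a..b, f y t) x =
      ∫ t in a..b, iteratedFDeriv ℝ n (fun y => f y t) x := by
  induction n generalizing x with
  | zero =>
    exact ((continuousMultilinearCurryFin0 ℝ E F).symm.toLinearIsometry.intervalIntegral_comp_comm
      (f x)).symm
  | succ n ih =>
    have hn : ContDiff ℝ 1 fun q : E × ℝ => iteratedFDeriv ℝ n (fun y => f y q.2) q.1 :=
      contDiff_iteratedFDeriv_uncurry (m := 1) n (by rwa [add_comm])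
    simp only [iteratedFDeriv_succ_eq_comp_left, Function.comp_apply]
    rw [funext (ih (hf.of_le (by norm_cast; omega))),
      (hasFDerivAt_intervalIntegral_of_contDiff hn a b x).fderiv]
    exact (LinearIsometry.intervalIntegral_comp_comm (𝕜 := ℝ)
      (E := E →L[ℝ] E [×n]→L[ℝ] F) (F := E [×n + 1]→L[ℝ] F)
      (continuousMultilinearCurryLeftEquiv ℝ
        (fun _ : Fin (n + 1) => E) F).symm.toLinearIsometry _).symm

end ParametricIntegral

section SegmentAverage

variable {E F : Type*} [NormedAddCommGroup E] [NormedSpace ℝ E]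
  [NormedAddCommGroup F] [NormedSpace ℝ F] [CompleteSpace F]

theorem norm_lineMap_id_le_one {σ : E →L[ℝ] E} (hσ : ‖σ‖ ≤ 1) {t : ℝ} (ht : t ∈ Set.Icc 0 1) :
    ‖AffineMap.lineMap (ContinuousLinearMap.id ℝ E) σ t‖ ≤ 1 := by
  rw [← mem_closedBall_zero_iff]
  exact (convex_closedBall _ _).lineMap_mem
    (by simpa using ContinuousLinearMap.norm_id_le) (by simpa using hσ) ht

theorem norm_iteratedFDeriv_integral_lineMap_le {σ : E →L[ℝ] E} (hσ : ‖σ‖ ≤ 1) {g : E → F} {n : ℕ}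
    (hg : ContDiff ℝ n g) {x : E} {B : ℝ}
    (hB : ∀ t ∈ Set.Icc (0 : ℝ) 1, ‖iteratedFDeriv ℝ n g (AffineMap.lineMap x (σ x) t)‖ ≤ B) :
    ‖iteratedFDeriv ℝ n (fun y => ∫ t in (0 : ℝ)..1, g (AffineMap.lineMap y (σ y) t)) x‖ ≤ B := by
  have hsmooth : ContDiff ℝ n (Function.uncurry fun (y : E) (t : ℝ) =>
      g (AffineMap.lineMap y (σ y) t)) := by
    simp only [AffineMap.lineMap_apply_module]
    exact hg.comp (by fun_prop)
  rw [iteratedFDeriv_intervalIntegral n hsmooth]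
  suffices ∀ t ∈ Set.Icc (0 : ℝ) 1,
      ‖iteratedFDeriv ℝ n (fun y => g (AffineMap.lineMap y (σ y) t)) x‖ ≤ B by
    simpa using intervalIntegral.norm_integral_le_of_norm_le_const (a := 0) (b := 1)
      fun t ht => this t (Set.Ioc_subset_Icc_self (by simpa using ht))
  intro t ht
  set A := AffineMap.lineMap (ContinuousLinearMap.id ℝ E) σ t with hA
  have hA_apply (y : E) : AffineMap.lineMap y (σ y) t = A y := by
    simp [hA, AffineMap.lineMap_apply_module]
  simp only [hA_apply] at hB ⊢
  calc ‖iteratedFDeriv ℝ n (g ∘ A) x‖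
      ≤ ‖iteratedFDeriv ℝ n g (A x)‖ * ∏ _i : Fin n, ‖A‖ := by
        rw [A.iteratedFDeriv_comp_right hg x le_rfl]
        exact ContinuousMultilinearMap.norm_compContinuousLinearMap_le _ _
    _ ≤ ‖iteratedFDeriv ℝ n g (A x)‖ * 1 := by
        gcongr
        exact Finset.prod_le_one (fun _ _ => norm_nonneg _) fun _ _ => norm_lineMap_id_le_one hσ ht
    _ ≤ B := by rw [mul_one, ← hA_apply]; exact hB t ht

theorem sub_eq_integral_fderiv_lineMap {φ : E → F} (hφ : ContDiff ℝ 1 φ) (x y : E) :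
    φ y - φ x = ∫ t in (0 : ℝ)..1, fderiv ℝ φ (AffineMap.lineMap x y t) (y - x) := by
  have h := map_add_eq_sum_add_integral_iteratedFDeriv (n := 0) (f := φ) (x := x) (y := y - x)
    fun _ _ => by simpa using hφ.contDiffAt
  simp only [add_sub_cancel, zero_add, Finset.sum_range_one, Nat.factorial_zero, Nat.cast_one,
    inv_one, one_smul, iteratedFDeriv_zero_apply, pow_zero] at h
  rw [h, add_sub_cancel_left]
  refine intervalIntegral.integral_congr fun t _ => ?_
  rw [AffineMap.lineMap_apply_module', add_comm x]
  exact iteratedFDeriv_one_apply _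

end SegmentAverage

/-- Peetre's inequality. -/
theorem one_add_norm_rpow_le {E : Type*} [SeminormedAddCommGroup E] (p : ℝ) (x y : E) :
    (1 + ‖y‖) ^ p ≤ (1 + ‖x - y‖) ^ |p| * (1 + ‖x‖) ^ p := by
  have hxy : 1 + ‖x‖ ≤ (1 + ‖x - y‖) * (1 + ‖y‖) := by
    nlinarith [norm_le_norm_sub_add x y, norm_nonneg (x - y), norm_nonneg y]
  have hyx : 1 + ‖y‖ ≤ (1 + ‖x - y‖) * (1 + ‖x‖) := by
    nlinarith [norm_le_norm_sub_add y x, norm_sub_rev x y, norm_nonneg (x - y), norm_nonneg x]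
  rcases le_total 0 p with hp | hp
  · rw [abs_of_nonneg hp, ← Real.mul_rpow (by positivity) (by positivity)]
    exact Real.rpow_le_rpow (by positivity) hyx hp
  · rw [abs_of_nonpos hp, Real.rpow_neg (by positivity), ← div_eq_inv_mul,
      le_div_iff₀' (by positivity), ← Real.mul_rpow (by positivity) (by positivity)]
    exact Real.rpow_le_rpow_of_nonpos (by positivity) hxy hp

section LeibnizReciprocal

variable {E : Type*} [NormedAddCommGroup E] [NormedSpace ℝ E]

theorem norm_iteratedFDeriv_inv_clm_le (L : E →L[ℝ] ℝ) {x : E} (hx : L x ≠ 0) (n : ℕ) :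
    ‖iteratedFDeriv ℝ n (fun z => (L z)⁻¹) x‖ ≤ n.factorial * ‖L‖ ^ n / |L x| ^ (n + 1) := by
  have hopen : IsOpen ({0}ᶜ : Set ℝ) := isOpen_compl_singleton
  have hcomp := L.iteratedFDerivWithin_comp_right (f := Inv.inv) (n := n) (s := {0}ᶜ)
    (fun z hz => (contDiffAt_inv ℝ hz).contDiffWithinAt) hopen.uniqueDiffOn
    (hopen.preimage L.continuous).uniqueDiffOn hx le_rfl
  rw [iteratedFDerivWithin_of_isOpen n (hopen.preimage L.continuous) hx,
    iteratedFDerivWithin_of_isOpen n hopen hx] at hcomp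
  have hinv : ‖iteratedFDeriv ℝ n Inv.inv (L x)‖ = n.factorial / |L x| ^ (n + 1) := by
    rw [norm_iteratedFDeriv_eq_norm_iteratedDeriv, iteratedDeriv_eq_iterate, iter_deriv_inv,
      show (-1 - n : ℤ) = -(n + 1 : ℕ) by push_cast; ring, zpow_neg, zpow_natCast]
    simp [div_eq_mul_inv]
  calc ‖iteratedFDeriv ℝ n (Inv.inv ∘ L) x‖
      ≤ ‖iteratedFDeriv ℝ n Inv.inv (L x)‖ * ∏ _i : Fin n, ‖L‖ := by
        rw [hcomp]
        exact ContinuousMultilinearMap.norm_compContinuousLinearMap_le _ _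
    _ = n.factorial * ‖L‖ ^ n / |L x| ^ (n + 1) := by
        rw [hinv, Finset.prod_const, Finset.card_univ, Fintype.card_fin, div_mul_eq_mul_div]

theorem norm_iteratedFDeriv_smul_le_of_isOpen {F : Type*} [NormedAddCommGroup F] [NormedSpace ℝ F]
    {s : Set E} (hs : IsOpen s) {f : E → ℝ} {g : E → F} {n : ℕ} (hf : ContDiffOn ℝ n f s)
    (hg : ContDiffOn ℝ n g s) {x : E} (hx : x ∈ s) :
    ‖iteratedFDeriv ℝ n (fun y => f y • g y) x‖ ≤ ∑ i ∈ Finset.range (n + 1),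
      (n.choose i : ℝ) * ‖iteratedFDeriv ℝ i f x‖ * ‖iteratedFDeriv ℝ (n - i) g x‖ := by
  simpa only [iteratedFDerivWithin_of_isOpen _ hs hx] using
    norm_iteratedFDerivWithin_smul_le hf hg hs.uniqueDiffOn hx le_rfl

end LeibnizReciprocal

section ReflectionQuotient

variable {E F : Type*} [NormedAddCommGroup E] [InnerProductSpace ℝ E]
  [NormedAddCommGroup F] [NormedSpace ℝ F]

/-- The divided difference `(φ(z) - φ(σ_α z)) / ⟨z, α⟩` of `φ` along the reflection `σ_α`, with
junk value `0` on the hyperplane `⟨z, α⟩ = 0`. It is written for vector-valued `φ`, so the division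
is a scalar multiplication by the inverse. -/
def reflectionQuotient (α : E) (φ : E → F) (z : E) : F :=
  ⟪z, α⟫⁻¹ • (φ z - φ ((ℝ ∙ α)ᗮ.reflection z))

theorem reflection_orthogonal_singleton_sub_self (α x : E) :
    (ℝ ∙ α)ᗮ.reflection x - x = -⟪x, α⟫ • (2 / ‖α‖ ^ 2) • α := by
  rw [Submodule.reflection_orthogonal_apply, Submodule.reflection_singleton_apply,
    real_inner_comm]
  simp only [RCLike.ofReal_real_eq_id, id_eq]
  module

theorem norm_two_div_norm_sq_smul (α : E) : ‖(2 / ‖α‖ ^ 2) • α‖ = 2 / ‖α‖ := by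
  rcases eq_or_ne α 0 with rfl | hα
  · simp
  · rw [norm_smul, Real.norm_of_nonneg (by positivity)]
    field_simp

theorem isOpen_setOf_inner_ne_zero (α : E) : IsOpen {z : E | ⟪z, α⟫ ≠ 0} :=
  isOpen_ne_fun (by fun_prop) continuous_const

theorem contDiffAt_reflectionQuotient {n : WithTop ℕ∞} {φ : E → F} (hφ : ContDiff ℝ n φ) {α x : E}
    (hx : ⟪x, α⟫ ≠ 0) : ContDiffAt ℝ n (reflectionQuotient α φ) x :=
  ((contDiffAt_id.inner ℝ contDiffAt_const).inv hx).smul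
    (hφ.sub (hφ.comp (LinearIsometryEquiv.contDiff _))).contDiffAt

theorem reflectionQuotient_eq_integral [CompleteSpace F] {φ : E → F} (hφ : ContDiff ℝ 1 φ)
    {α x : E} (hx : ⟪x, α⟫ ≠ 0) :
    reflectionQuotient α φ x = ∫ t in (0 : ℝ)..1, fderiv ℝ φ
      (AffineMap.lineMap x ((ℝ ∙ α)ᗮ.reflection x) t) ((2 / ‖α‖ ^ 2) • α) := by
  rw [reflectionQuotient, inv_smul_eq_iff₀ hx, ← neg_sub, sub_eq_integral_fderiv_lineMap hφ,
    reflection_orthogonal_singleton_sub_self, ← intervalIntegral.integral_neg,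
    ← intervalIntegral.integral_smul]
  simp only [map_smul, neg_smul, map_neg, neg_neg]

theorem norm_iteratedFDeriv_reflectionQuotient_le_of_segment [CompleteSpace F] {φ : E → F} {n : ℕ}
    (hφ : ContDiff ℝ (n + 1 : ℕ) φ) {α x : E} (hx : ⟪x, α⟫ ≠ 0) {B : ℝ}
    (hB : ∀ t ∈ Set.Icc (0 : ℝ) 1, ‖iteratedFDeriv ℝ (n + 1) φ
      (AffineMap.lineMap x ((ℝ ∙ α)ᗮ.reflection x) t)‖ ≤ B) :
    ‖iteratedFDeriv ℝ n (reflectionQuotient α φ) x‖ ≤ 2 / ‖α‖ * B := by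
  set c : E := (2 / ‖α‖ ^ 2) • α with hc
  set σ : E →L[ℝ] E := ((ℝ ∙ α)ᗮ.reflection : E →L[ℝ] E)
  have hφ' : ContDiff ℝ n (fderiv ℝ φ) := hφ.fderiv_right (by norm_cast)
  have hlocal : reflectionQuotient α φ =ᶠ[nhds x] fun y =>
      ∫ t in (0 : ℝ)..1, fderiv ℝ φ (AffineMap.lineMap y (σ y) t) c :=
    Filter.eventually_of_mem ((isOpen_setOf_inner_ne_zero α).mem_nhds hx) fun y hy =>
      reflectionQuotient_eq_integral (hφ.of_le (by norm_cast; omega)) hy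
  rw [hlocal.iteratedFDeriv ℝ n |>.eq_of_nhds]
  refine norm_iteratedFDeriv_integral_lineMap_le (g := fun y => fderiv ℝ φ y c)
    (LinearIsometry.norm_toContinuousLinearMap_le _) (by fun_prop) fun t ht => ?_
  calc _ ≤ ‖c‖ * ‖iteratedFDeriv ℝ n (fderiv ℝ φ) (AffineMap.lineMap x (σ x) t)‖ :=
        norm_iteratedFDeriv_clm_apply_const hφ'.contDiffAt le_rfl
    _ ≤ 2 / ‖α‖ * B := by
        rw [norm_iteratedFDeriv_fderiv, hc, norm_two_div_norm_sq_smul]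
        gcongr
        exact hB t ht

theorem norm_iteratedFDeriv_inv_inner_le {α x : E} (hα : α ≠ 0) (hx : ‖α‖ ≤ |⟪x, α⟫|) (n : ℕ) :
    ‖iteratedFDeriv ℝ n (fun z : E => ⟪z, α⟫⁻¹) x‖ ≤ n.factorial / ‖α‖ := by
  have hα' : 0 < ‖α‖ := norm_pos_iff.mpr hα
  have hL := norm_iteratedFDeriv_inv_clm_le (innerSL ℝ α) (x := x)
    (by simpa [real_inner_comm] using (hα'.trans_le hx).ne') n
  simp only [innerSL_apply_apply, innerSL_apply_norm, fun z => real_inner_comm z α] at hL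
  calc _ ≤ n.factorial * ‖α‖ ^ n / |⟪x, α⟫| ^ (n + 1) := hL
    _ ≤ n.factorial * ‖α‖ ^ n / ‖α‖ ^ (n + 1) := by gcongr
    _ = n.factorial / ‖α‖ := by field_simp; ring

theorem norm_iteratedFDeriv_sub_comp_isometry_le (σ : E ≃ₗᵢ[ℝ] E) {φ : E → F} {n : ℕ}
    (hφ : ContDiff ℝ n φ) {x : E} {B : ℝ} (hx : ‖iteratedFDeriv ℝ n φ x‖ ≤ B)
    (hσx : ‖iteratedFDeriv ℝ n φ (σ x)‖ ≤ B) :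
    ‖iteratedFDeriv ℝ n (fun z => φ z - φ (σ z)) x‖ ≤ 2 * B := by
  calc ‖iteratedFDeriv ℝ n (fun z => φ z - φ (σ z)) x‖
      = ‖iteratedFDeriv ℝ n φ x - iteratedFDeriv ℝ n (φ ∘ σ) x‖ :=
        congrArg _ (iteratedFDeriv_sub_apply hφ.contDiffAt (hφ.comp σ.contDiff).contDiffAt)
    _ ≤ B + B := norm_sub_le_of_le hx (by rwa [σ.norm_iteratedFDeriv_comp_right])
    _ = 2 * B := (two_mul B).symm

theorem norm_iteratedFDeriv_reflectionQuotient_le_of_norm_le_abs_inner {φ : E → F} {n : ℕ}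
    (hφ : ContDiff ℝ n φ) {α x : E} (hα : α ≠ 0) (hx : ‖α‖ ≤ |⟪x, α⟫|) {B : ℝ}
    (hB : ∀ i ≤ n, ‖iteratedFDeriv ℝ i φ x‖ ≤ B)
    (hσB : ∀ i ≤ n, ‖iteratedFDeriv ℝ i φ ((ℝ ∙ α)ᗮ.reflection x)‖ ≤ B) :
    ‖iteratedFDeriv ℝ n (reflectionQuotient α φ) x‖ ≤ 2 / ‖α‖ * ((n + 1).factorial * B) := by
  set σ := (ℝ ∙ α)ᗮ.reflection
  have hα' : 0 < ‖α‖ := norm_pos_iff.mpr hα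
  have hx0 : ⟪x, α⟫ ≠ 0 := abs_pos.mp (hα'.trans_le hx)
  have hopen := isOpen_setOf_inner_ne_zero α
  have hleibniz := norm_iteratedFDeriv_smul_le_of_isOpen (f := fun z : E => ⟪z, α⟫⁻¹)
    (g := fun z => φ z - φ (σ z)) (n := n) hopen (fun z hz =>
      ((contDiffAt_id.inner ℝ contDiffAt_const).inv hz).contDiffWithinAt)
    (hφ.sub (hφ.comp σ.contDiff)).contDiffOn hx0
  refine hleibniz.trans ?_
  have hterm : ∀ i ∈ Finset.range (n + 1), (n.choose i : ℝ) *
      ‖iteratedFDeriv ℝ i (fun z : E => ⟪z, α⟫⁻¹) x‖ *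
        ‖iteratedFDeriv ℝ (n - i) (fun z => φ z - φ (σ z)) x‖ ≤ n.factorial / ‖α‖ * (2 * B) := by
    intro i hi
    have hin : i ≤ n := Finset.mem_range_succ_iff.mp hi
    have hchoose : (n.choose i * i.factorial : ℝ) ≤ n.factorial := by
      rw [← Nat.choose_mul_factorial_mul_factorial hin]
      exact_mod_cast Nat.le_mul_of_pos_right _ (Nat.factorial_pos _)
    calc _ ≤ (n.choose i : ℝ) * (i.factorial / ‖α‖) * (2 * B) := by
          gcongr
          · exact norm_iteratedFDeriv_inv_inner_le hα hx i
          · exact norm_iteratedFDeriv_sub_comp_isometry_le σ (hφ.of_le (by norm_cast; omega))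
              (hB _ (Nat.sub_le n i)) (hσB _ (Nat.sub_le n i))
      _ ≤ n.factorial / ‖α‖ * (2 * B) := by
          have hB0 : 0 ≤ B := (norm_nonneg _).trans (hB 0 (Nat.zero_le n))
          rw [← mul_div_assoc]
          gcongr
  calc _ ≤ ∑ _i ∈ Finset.range (n + 1), n.factorial / ‖α‖ * (2 * B) := Finset.sum_le_sum hterm
    _ = 2 / ‖α‖ * ((n + 1).factorial * B) := by
        rw [Finset.sum_const, Finset.card_range, nsmul_eq_mul, Nat.factorial_succ]
        push_cast
        ring

theorem norm_sub_lineMap_reflection_le {α x : E} (hx : |⟪x, α⟫| ≤ ‖α‖) {t : ℝ}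
    (ht : t ∈ Set.Icc (0 : ℝ) 1) :
    ‖x - AffineMap.lineMap x ((ℝ ∙ α)ᗮ.reflection x) t‖ ≤ 2 := by
  rw [← dist_eq_norm, dist_left_lineMap, dist_comm, dist_eq_norm,
    reflection_orthogonal_singleton_sub_self, norm_smul, norm_two_div_norm_sq_smul, norm_neg,
    Real.norm_of_nonneg ht.1, Real.norm_eq_abs]
  calc t * (|⟪x, α⟫| * (2 / ‖α‖)) ≤ 1 * (‖α‖ * (2 / ‖α‖)) := by gcongr; exact ht.2
    _ = 2 * (‖α‖ / ‖α‖) := by ring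
    _ ≤ 2 := mul_le_of_le_one_right zero_le_two (div_self_le_one _)

theorem norm_iteratedFDeriv_reflectionQuotient_le [CompleteSpace F] {φ : E → F} {n : ℕ}
    (hφ : ContDiff ℝ (n + 1 : ℕ) φ) {A p : ℝ}
    (hA : ∀ i ≤ n + 1, ∀ y, ‖iteratedFDeriv ℝ i φ y‖ ≤ A * (1 + ‖y‖) ^ p) {α x : E}
    (hx : ⟪x, α⟫ ≠ 0) {i : ℕ} (hi : i ≤ n) :
    ‖iteratedFDeriv ℝ i (reflectionQuotient α φ) x‖ ≤
      2 / ‖α‖ * (max (3 ^ |p| : ℝ) (n + 1).factorial * (A * (1 + ‖x‖) ^ p)) := by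
  have hα : α ≠ 0 := fun h => hx (by simp [h])
  have hw : 0 ≤ A * (1 + ‖x‖) ^ p := (norm_nonneg _).trans (hA 0 (Nat.zero_le _) x)
  have hA0 : 0 ≤ A := nonneg_of_mul_nonneg_left hw (by positivity)
  have hi1 : (i + 1).factorial ≤ (n + 1).factorial := Nat.factorial_le (by omega)
  rcases le_total |⟪x, α⟫| ‖α‖ with hnear | hfar
  · calc _ ≤ 2 / ‖α‖ * (3 ^ |p| * (A * (1 + ‖x‖) ^ p)) := by
          refine norm_iteratedFDeriv_reflectionQuotient_le_of_segment
            (hφ.of_le (by norm_cast; omega)) hx fun t ht => (hA _ (by omega) _).trans ?_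
          rw [mul_left_comm]
          gcongr
          refine (one_add_norm_rpow_le p x _).trans ?_
          gcongr
          linarith [norm_sub_lineMap_reflection_le hnear ht]
      _ ≤ _ := by gcongr; exact le_max_left _ _
  · calc _ ≤ 2 / ‖α‖ * ((i + 1).factorial * (A * (1 + ‖x‖) ^ p)) := by
          refine norm_iteratedFDeriv_reflectionQuotient_le_of_norm_le_abs_inner
            (hφ.of_le (by norm_cast; omega)) hα hfar (fun j hj => hA j (by omega) x) fun j hj => ?_
          simpa using hA j (by omega) ((ℝ ∙ α)ᗮ.reflection x)
      _ ≤ _ := by gcongr; exact le_max_of_le_right (by exact_mod_cast hi1)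

end ReflectionQuotient

section PartialDerivatives

variable {N : ℕ} {f : EuclideanSpace ℝ (Fin N) → ℂ}

theorem foldr_pderivE_apply (L : List (Fin N)) {x : EuclideanSpace ℝ (Fin N)}
    (hf : ContDiffAt ℝ L.length f x) :
    L.foldr pderivE f x =
      iteratedFDeriv ℝ L.length f x fun k => EuclideanSpace.single L[k] 1 := by
  induction L generalizing x with
  | nil => simp
  | cons j L ih =>
    have hL : L.foldr pderivE f =ᶠ[nhds x] fun y =>
        iteratedFDeriv ℝ L.length f y fun k => EuclideanSpace.single L[k] 1 :=
      ((hf.of_le (by simp)).eventually (by simp)).mono fun y hy => ih hy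
    have hdiff : DifferentiableAt ℝ (iteratedFDeriv ℝ L.length f) x :=
      hf.differentiableAt_iteratedFDeriv (by norm_cast; simp)
    rw [List.foldr_cons, pderivE, hL.fderiv_eq,
      fderiv_continuousMultilinear_apply_const_apply hdiff]
    rfl

theorem contDiff_pderivE {m : ℕ} (j : Fin N) (hf : ContDiff ℝ (m + 1 : ℕ) f) :
    ContDiff ℝ m (pderivE j f) :=
  (hf.fderiv_right (by norm_cast)).clm_apply contDiff_const

theorem contDiff_foldr_pderivE {m : ℕ} (L : List (Fin N)) (hf : ContDiff ℝ (m + L.length : ℕ) f) :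
    ContDiff ℝ m (L.foldr pderivE f) := by
  induction L generalizing m with
  | nil => exact hf
  | cons j L ih =>
    exact contDiff_pderivE j (ih (by rwa [List.length_cons, ← add_assoc, add_right_comm] at hf))

theorem pderivE_comm (hf : ContDiff ℝ 2 f) (i j : Fin N) :
    pderivE i (pderivE j f) = pderivE j (pderivE i f) := by
  have hdiff : Differentiable ℝ (fderiv ℝ f) :=
    (hf.fderiv_right (m := 1) (by norm_num)).differentiable one_ne_zero
  funext x
  have hsnd (i j : Fin N) : pderivE i (pderivE j f) x =
      fderiv ℝ (fderiv ℝ f) x (EuclideanSpace.single i 1) (EuclideanSpace.single j 1) := by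
    change fderiv ℝ (fun y => fderiv ℝ f y _) x _ = _
    simp [fderiv_clm_apply (hdiff x) (differentiableAt_const _)]
  rw [hsnd, hsnd]
  exact (hf.contDiffAt.isSymmSndFDerivAt (by simp)).eq _ _

theorem foldr_pderivE_eq_of_perm {L L' : List (Fin N)} (h : L.Perm L')
    (hf : ContDiff ℝ L.length f) : L.foldr pderivE f = L'.foldr pderivE f := by
  induction h with
  | nil => rfl
  | cons j _ ih => rw [List.foldr_cons, ih (hf.of_le (by simp)), List.foldr_cons]
  | swap i j L =>
    have hL : ContDiff ℝ (2 + L.length : ℕ) f :=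
      hf.of_le (by norm_cast; simp only [List.length_cons]; omega)
    exact pderivE_comm (contDiff_foldr_pderivE L hL) j i
  | trans h₁ _ ih₁ ih₂ => rw [ih₁ hf, ih₂ (by rwa [← h₁.length_eq])]

/-- The coordinate directions of the multi-index `β`, each `j` listed `β j` times, in the order in
which `mderivE β` applies the partial derivatives. -/
def multiIndexList (β : Fin N → ℕ) : List (Fin N) :=
  (List.finRange N).flatMap fun j => List.replicate (β j) j

theorem length_multiIndexList (β : Fin N → ℕ) : (multiIndexList β).length = ∑ j, β j := by
  simp [multiIndexList, List.length_flatMap, Fin.sum_univ_def]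

theorem count_multiIndexList (β : Fin N → ℕ) (j : Fin N) : (multiIndexList β).count j = β j := by
  simp [multiIndexList, List.count_flatMap, List.count_replicate, ← Fin.sum_univ_def]

theorem mderivE_eq_foldr_pderivE (β : Fin N → ℕ) (f : EuclideanSpace ℝ (Fin N) → ℂ) :
    mderivE β f = (multiIndexList β).foldr pderivE f := by
  have hreplicate (n : ℕ) (j : Fin N) (g : EuclideanSpace ℝ (Fin N) → ℂ) :
      (List.replicate n j).foldr pderivE g = (pderivE j)^[n] g := by
    induction n with
    | zero => rfl
    | succ n ih => rw [List.replicate_succ, List.foldr_cons, ih, Function.iterate_succ_apply']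
  simp only [mderivE, multiIndexList, List.foldr_flatMap, hreplicate]

theorem perm_multiIndexList_count (L : List (Fin N)) : L.Perm (multiIndexList fun j => L.count j) :=
  List.perm_iff_count.mpr fun j => (count_multiIndexList (fun j => L.count j) j).symm

theorem norm_mderivE_le (β : Fin N → ℕ) {x : EuclideanSpace ℝ (Fin N)}
    (hf : ContDiffAt ℝ (∑ j, β j : ℕ) f x) :
    ‖mderivE β f x‖ ≤ ‖iteratedFDeriv ℝ (∑ j, β j) f x‖ := by
  rw [← length_multiIndexList] at hf ⊢
  rw [mderivE_eq_foldr_pderivE, foldr_pderivE_apply _ hf]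
  exact ContinuousMultilinearMap.unit_le_opNorm _
    ((pi_norm_le_iff_of_nonneg zero_le_one).mpr fun k => by simp)

theorem opNorm_le_sum_norm_single {ι G : Type*} [Fintype ι] [DecidableEq ι]
    [NormedAddCommGroup G] [NormedSpace ℝ G] {n : ℕ}
    (T : ContinuousMultilinearMap ℝ (fun _ : Fin n => EuclideanSpace ℝ ι) G) :
    ‖T‖ ≤ ∑ r : Fin n → ι, ‖T fun k => EuclideanSpace.single (r k) 1‖ := by
  refine ContinuousMultilinearMap.opNorm_le_bound (by positivity) fun v => ?_
  have hv : v = fun k => ∑ j, v k j • EuclideanSpace.single j (1 : ℝ) := by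
    ext k j
    simp [Pi.single_apply]
  calc ‖T v‖ = ‖∑ r : Fin n → ι, (∏ k, v k (r k)) • T fun k => EuclideanSpace.single (r k) 1‖ := by
        conv_lhs => rw [hv]
        rw [T.map_sum]
        simp only [T.map_smul_univ]
    _ ≤ ∑ r : Fin n → ι, (∏ k, ‖v k‖) * ‖T fun k => EuclideanSpace.single (r k) 1‖ := by
        refine norm_sum_le_of_le _ fun r _ => ?_
        rw [norm_smul, norm_prod]
        gcongr with k
        exact PiLp.norm_apply_le (v k) (r k)
    _ = _ := by rw [← Finset.mul_sum, mul_comm]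

theorem norm_iteratedFDeriv_le_of_norm_mderivE_le {n : ℕ} (hf : ContDiff ℝ n f)
    {x : EuclideanSpace ℝ (Fin N)} {B : ℝ}
    (hB : ∀ β : Fin N → ℕ, ∑ j, β j = n → ‖mderivE β f x‖ ≤ B) :
    ‖iteratedFDeriv ℝ n f x‖ ≤ N ^ n * B := by
  have hr (r : Fin n → Fin N) :
      ‖iteratedFDeriv ℝ n f x fun k => EuclideanSpace.single (r k) 1‖ ≤ B := by
    obtain ⟨L, rfl, hL⟩ :
        ∃ L : List (Fin N), ∃ h : L.length = n, ∀ k, L.get (k.cast h.symm) = r k :=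
      ⟨List.ofFn r, List.length_ofFn, by simp⟩
    have hperm := perm_multiIndexList_count L
    have hcount := hB (fun j => L.count j) (by rw [← length_multiIndexList, ← hperm.length_eq])
    rw [mderivE_eq_foldr_pderivE, ← foldr_pderivE_eq_of_perm hperm hf,
      foldr_pderivE_apply _ hf.contDiffAt] at hcount
    simpa [← hL] using hcount
  calc _ ≤ ∑ _r : Fin n → Fin N, B :=
        (opNorm_le_sum_norm_single _).trans (Finset.sum_le_sum fun r _ => hr r)
    _ = N ^ n * B := by simp

end PartialDerivatives

theorem dunklReflect_eq_reflection {N : ℕ} (α x : EuclideanSpace ℝ (Fin N)) :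
    dunklReflect α x = (ℝ ∙ α)ᗮ.reflection x := by
  rw [← sub_add_cancel ((ℝ ∙ α)ᗮ.reflection x) x, reflection_orthogonal_singleton_sub_self,
    dunklReflect]
  module

theorem quotient_dunklReflect_eq_reflectionQuotient {N : ℕ} (α : EuclideanSpace ℝ (Fin N))
    (φ : EuclideanSpace ℝ (Fin N) → ℂ) :
    (fun z => (φ z - φ (dunklReflect α z)) / ((⟪z, α⟫ : ℝ) : ℂ)) = reflectionQuotient α φ := by
  funext z
  rw [reflectionQuotient, dunklReflect_eq_reflection, Complex.real_smul, Complex.ofReal_inv,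
    div_eq_inv_mul]

theorem quotient_diff_reflect_decay_general {N : ℕ} (α : EuclideanSpace ℝ (Fin N)) (p : ℝ)
    {ℓ : ℕ} (hℓ : 1 ≤ ℓ) :
    ∃ C : ℝ, 0 < C ∧ ∀ φ : EuclideanSpace ℝ (Fin N) → ℂ, ContDiff ℝ (ℓ : ℕ∞) φ →
      (∀ β : Fin N → ℕ, (∑ j, β j) ≤ ℓ → ∀ x, ‖mderivE β φ x‖ ≤ (1 + ‖x‖) ^ p) →
      ∀ β : Fin N → ℕ, (∑ j, β j) ≤ ℓ - 1 →
        ∀ x : EuclideanSpace ℝ (Fin N), ⟪x, α⟫ ≠ 0 →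
          ‖mderivE β (fun z => (φ z - φ (dunklReflect α z)) / ((⟪z, α⟫ : ℝ) : ℂ)) x‖ ≤
            C * (1 + ‖x‖) ^ p := by
  obtain ⟨n, rfl⟩ := Nat.exists_eq_add_of_le' hℓ
  set K : ℝ := 2 / ‖α‖ * (max (3 ^ |p| : ℝ) (n + 1).factorial * (N + 1) ^ (n + 1))
  refine ⟨K + 1, by positivity, fun φ hφ hbound β hβ x hx => ?_⟩
  have hA (i : ℕ) (hi : i ≤ n + 1) (y : EuclideanSpace ℝ (Fin N)) :
      ‖iteratedFDeriv ℝ i φ y‖ ≤ (N + 1) ^ (n + 1) * (1 + ‖y‖) ^ p := by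
    calc _ ≤ (N : ℝ) ^ i * (1 + ‖y‖) ^ p :=
          norm_iteratedFDeriv_le_of_norm_mderivE_le (hφ.of_le (by exact_mod_cast hi))
            fun β hβ => hbound β (hβ.trans_le hi) y
      _ ≤ (N + 1) ^ i * (1 + ‖y‖) ^ p := by gcongr; linarith
      _ ≤ _ := by gcongr; linarith
  rw [quotient_dunklReflect_eq_reflectionQuotient]
  calc _ ≤ ‖iteratedFDeriv ℝ (∑ j, β j) (reflectionQuotient α φ) x‖ :=
        norm_mderivE_le β ((contDiffAt_reflectionQuotient hφ hx).of_le (by norm_cast; omega))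
    _ ≤ K * (1 + ‖x‖) ^ p :=
        (norm_iteratedFDeriv_reflectionQuotient_le hφ hA hx hβ).trans_eq (by ring)
    _ ≤ (K + 1) * (1 + ‖x‖) ^ p := by gcongr; linarith

theorem quotient_diff_reflect_decay
    (N : ℕ) (hN : 1 ≤ N)
    (R : Finset (EuclideanSpace ℝ (Fin N)))
    (k : EuclideanSpace ℝ (Fin N) → ℝ)
    (hR0 : (0 : EuclideanSpace ℝ (Fin N)) ∉ R)
    (hRnorm : ∀ α ∈ R, ‖α‖ = Real.sqrt 2)
    (hRrefl : ∀ α ∈ R, ∀ β ∈ R, dunklReflect α β ∈ R)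
    (hk0 : ∀ α ∈ R, 0 ≤ k α)
    (hkinv : ∀ α ∈ R, ∀ β ∈ R, k (dunklReflect α β) = k β)
    (M : ℝ) (hM : 0 ≤ M) (ℓ : ℕ) (hℓ : 1 ≤ ℓ)
    (α : EuclideanSpace ℝ (Fin N)) (hα : α ∈ R)
    (φ : EuclideanSpace ℝ (Fin N) → ℂ) (hφ : ContDiff ℝ (ℓ : ℕ∞) φ)
    (hbound : ∀ β : Fin N → ℕ, (∑ j, β j) ≤ ℓ → ∀ x,
      ‖mderivE β φ x‖ ≤ (1 + ‖x‖) ^ (-(homDim N R k) - M)) :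
    ∃ C : ℝ, 0 < C ∧ ∀ β : Fin N → ℕ, (∑ j, β j) ≤ ℓ - 1 →
      ∀ x : EuclideanSpace ℝ (Fin N), ⟪x, α⟫ ≠ 0 →
        ‖mderivE β (fun z => (φ z - φ (dunklReflect α z)) / ((⟪z, α⟫ : ℝ) : ℂ)) x‖ ≤
          C * (1 + ‖x‖) ^ (-(homDim N R k) - M) := by
  obtain ⟨C, hC, h⟩ := quotient_diff_reflect_decay_general α (-(homDim N R k) - M) hℓ
  exact ⟨C, hC, h φ hφ hbound⟩
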